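/- For every integer n ≥ 1 and every integer k with 0 ≤ k ≤ n−1, writing θ_k = (2k+1)π/(2n) and x_j = cos θ_j for j = 0,…,n−1, the product of distances from x_k to the other Chebyshev points of the first kind satisfies ∏_{j≠k} |x_k − x_j| = n · 2^{1−n} / sin(θ_k); in particular this product equals 2^{1−n} |T_n′(x_k)|. -/

import Mathlib

open Real Polynomial

/-!
The Chebyshev points `x_j` are the `n` simple roots of `T_n`, whose leading coefficient is
`2 ^ (n - 1)`. Differentiating `T_n = 2 ^ (n - 1) ∏ j, (X - x_j)` at `x_k` leaves the single term
`2 ^ (n - 1) ∏ j ≠ k, (x_k - x_j)`. On the other hand `T_n' (cos θ) * sin θ = n * sin (n * θ)`, and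
`|sin (n * θ)| = 1` wherever `T_n (cos θ) = cos (n * θ)` vanishes.
-/

section Polynomial

variable {R ι : Type*} [CommRing R] [IsDomain R] {p : R[X]} {s : Finset ι} {v : ι → R}

theorem eq_C_leadingCoeff_mul_nodal (hp : p.Splits) (hroots : p.roots = s.val.map v) :
    p = C p.leadingCoeff * Lagrange.nodal s v := by
  conv_lhs => rw [hp.eq_prod_roots, hroots, Multiset.map_map]
  rfl

theorem eval_derivative_eq_leadingCoeff_mul_prod_erase [DecidableEq ι] (hp : p.Splits)
    (hroots : p.roots = s.val.map v) {i : ι} (hi : i ∈ s) :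
    (derivative p).eval (v i) = p.leadingCoeff * ∏ j ∈ s.erase i, (v i - v j) := by
  conv_lhs => rw [eq_C_leadingCoeff_mul_nodal hp hroots]
  rw [derivative_C_mul, eval_C_mul, Lagrange.eval_nodal_derivative_eval_node_eq hi,
    Lagrange.eval_nodal]

end Polynomial

theorem eval_derivative_T_cos_mul_sin (n : ℤ) (θ : ℝ) :
    (derivative (Chebyshev.T ℝ n)).eval (cos θ) * sin θ = n * sin (n * θ) := by
  rw [Chebyshev.T_derivative_eq_U, eval_mul, eval_intCast, mul_assoc, Chebyshev.U_real_cos,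
    Int.cast_sub, Int.cast_one, sub_add_cancel]

theorem abs_eval_derivative_T_cos_mul_abs_sin {n : ℤ} {θ : ℝ} (hθ : cos (n * θ) = 0) :
    |(derivative (Chebyshev.T ℝ n)).eval (cos θ)| * |sin θ| = |(n : ℝ)| := by
  have habs_sin : |sin (n * θ)| = 1 := by simp [abs_sin_eq_sqrt_one_sub_cos_sq, hθ]
  rw [← abs_mul, eval_derivative_T_cos_mul_sin, abs_mul, habs_sin, mul_one]

/-- The angle `θ_k = (2k + 1)π / (2n)` whose cosine is the `k`-th Chebyshev point of the first kind,
for `k = 0, …, n - 1`. -/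
noncomputable def chebyshevAngle (n k : ℕ) : ℝ := (2 * (k : ℝ) + 1) * π / (2 * n)

/-- The Chebyshev point of the first kind `x_k = cos θ_k`, a root of `T_n` when `k < n`; the nodes
`Polynomial.Chebyshev.node` of Mathlib are the extremal points of `T_n` instead. -/
noncomputable def chebyshevPoint (n k : ℕ) : ℝ := cos (chebyshevAngle n k)

theorem roots_T_eq_map_chebyshevPoint (n : ℕ) :
    (Chebyshev.T ℝ n).roots = (Finset.range n).val.map (chebyshevPoint n) := by
  rw [Chebyshev.roots_T_real, Finset.image_val]
  exact (Chebyshev.roots_T_real_nodup n).dedup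

theorem splits_T_real (n : ℕ) : (Chebyshev.T ℝ n).Splits := by
  rw [splits_iff_card_roots, roots_T_eq_map_chebyshevPoint, Multiset.card_map, Finset.card_val,
    Finset.card_range, Chebyshev.natDegree_T, Int.natAbs_natCast]

section ChebyshevPoint

variable {n k : ℕ}

theorem abs_eval_derivative_T_chebyshevPoint_eq_prod (hk : k < n) :
    |(derivative (Chebyshev.T ℝ n)).eval (chebyshevPoint n k)| =
      2 ^ (n - 1) * ∏ j ∈ (Finset.range n).erase k, |chebyshevPoint n k - chebyshevPoint n j| := by
  rw [eval_derivative_eq_leadingCoeff_mul_prod_erase (splits_T_real n)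
    (roots_T_eq_map_chebyshevPoint n) (Finset.mem_range.mpr hk), Chebyshev.leadingCoeff_T,
    Int.natAbs_natCast, abs_mul, abs_of_pos (by positivity), Finset.abs_prod]

theorem prod_abs_chebyshevPoint_sub (hk : k < n) :
    ∏ j ∈ (Finset.range n).erase k, |chebyshevPoint n k - chebyshevPoint n j| =
      2 ^ (1 - (n : ℤ)) * |(derivative (Chebyshev.T ℝ n)).eval (chebyshevPoint n k)| := by
  have hpow : (2 : ℝ) ^ (1 - (n : ℤ)) = (2 ^ (n - 1))⁻¹ := by
    rw [← zpow_natCast, ← zpow_neg, Nat.cast_pred (Nat.zero_lt_of_lt hk), neg_sub]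
  rw [abs_eval_derivative_T_chebyshevPoint_eq_prod hk, hpow,
    inv_mul_cancel_left₀ (pow_ne_zero _ two_ne_zero)]

theorem cos_natCast_mul_chebyshevAngle (hn : n ≠ 0) : cos (n * chebyshevAngle n k) = 0 := by
  refine cos_eq_zero_iff.mpr ⟨k, ?_⟩
  rw [chebyshevAngle, Int.cast_natCast]
  field_simp

theorem chebyshevAngle_mem_Ioo (hk : k < n) : chebyshevAngle n k ∈ Set.Ioo 0 π := by
  have hn : (0 : ℝ) < n := Nat.cast_pos.mpr (Nat.zero_lt_of_lt hk)
  have hlt : 2 * (k : ℝ) + 1 < 2 * n := by exact_mod_cast (by lia : 2 * k + 1 < 2 * n)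
  refine ⟨by unfold chebyshevAngle; positivity, ?_⟩
  rw [chebyshevAngle, div_lt_iff₀ (by positivity), mul_comm π]
  exact mul_lt_mul_of_pos_right hlt pi_pos

theorem abs_eval_derivative_T_chebyshevPoint (hk : k < n) :
    |(derivative (Chebyshev.T ℝ n)).eval (chebyshevPoint n k)| = n / sin (chebyshevAngle n k) := by
  have hsin : 0 < sin (chebyshevAngle n k) := sin_pos_of_mem_Ioo (chebyshevAngle_mem_Ioo hk)
  have hcos : cos ((n : ℤ) * chebyshevAngle n k) = 0 :=
    cos_natCast_mul_chebyshevAngle (Nat.ne_zero_of_lt hk)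
  have hmul := abs_eval_derivative_T_cos_mul_abs_sin hcos
  rw [abs_of_pos hsin, Int.cast_natCast, Nat.abs_cast] at hmul
  exact eq_div_of_mul_eq hsin.ne' hmul

end ChebyshevPoint

/-- For every integer `n ≥ 1` and `0 ≤ k ≤ n−1`, writing `θ_j = (2j+1)π/(2n)` and
`x_j = cos θ_j`, the product of distances from `x_k` to the other Chebyshev points of
the first kind satisfies `∏_{j≠k} |x_k − x_j| = n · 2^(1−n) / sin θ_k`, and this
product equals `2^(1−n) |T_n′(x_k)|`. -/
theorem chebyshev_first_kind_product_of_distances (n k : ℕ) (hn : 1 ≤ n)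
    (hk : k ≤ n - 1) :
    (∏ j ∈ (Finset.range n).erase k,
        |Real.cos ((2 * (k : ℝ) + 1) * Real.pi / (2 * n)) -
          Real.cos ((2 * (j : ℝ) + 1) * Real.pi / (2 * n))|) =
      (n : ℝ) * (2 : ℝ) ^ (1 - (n : ℤ)) /
        Real.sin ((2 * (k : ℝ) + 1) * Real.pi / (2 * n)) ∧
    (∏ j ∈ (Finset.range n).erase k,
        |Real.cos ((2 * (k : ℝ) + 1) * Real.pi / (2 * n)) -
          Real.cos ((2 * (j : ℝ) + 1) * Real.pi / (2 * n))|) =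
      (2 : ℝ) ^ (1 - (n : ℤ)) *
        |(Polynomial.derivative (Polynomial.Chebyshev.T ℝ n)).eval
          (Real.cos ((2 * (k : ℝ) + 1) * Real.pi / (2 * n)))| := by
  have hkn : k < n := by lia
  have hprod := prod_abs_chebyshevPoint_sub hkn
  refine ⟨?_, hprod⟩
  calc
    _ = (2 : ℝ) ^ (1 - (n : ℤ)) *
          |(derivative (Chebyshev.T ℝ n)).eval (chebyshevPoint n k)| := hprod
    _ = (2 : ℝ) ^ (1 - (n : ℤ)) * (n / sin (chebyshevAngle n k)) := by
      rw [abs_eval_derivative_T_chebyshevPoint hkn]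
    _ = n * (2 : ℝ) ^ (1 - (n : ℤ)) / sin (chebyshevAngle n k) := by ring
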